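/- arXiv:alg-geom/9403010 — 2 statements merged into one kernel-verified Lean document; each statement's English description precedes it below -/
import Mathlib

section
/- Let 1 ≤ k ≤ n and let c ∈ ℂ with c ≠ 0. Then the quotient ring ℂ[X₁,…,X_k]/(Y_{n−k+1}, …, Y_{n−1}, Yₙ + c) has dimension binomial(n, k) as a ℂ-vector space. -/
/-!
For every `ℂ`-algebra `B`, the homomorphisms from the quantum ring to `B` are the monic polynomials
`P = X ^ k + x₁ X ^ (k - 1) + ⋯ + x_k` over `B` that divide `X ^ n + c` (`relations_iff_dvd`): dividing
`X ^ n` by `P` gives a quotient with coefficients `Y₀, …, Y_{n-k}`, and the remainder of `X ^ n + c`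
vanishes exactly when the relations hold.

Since `c ≠ 0`, the polynomial `X ^ n + c` is separable, so a monic divisor of it has at most one lift
along a square-zero extension (`eq_of_dvd_of_sub_sq`). Thus the quantum ring is unramified over `ℂ`,
hence a finite product of copies of `ℂ`, and its dimension is the number of its complex points. These
are the monic divisors of degree `k` of `X ^ n + c` over `ℂ`, which correspond to the `k`-element
subsets of its `n` distinct roots (`natCard_algHom_quantumRing`).
-/

/-- The Segre polynomials `Y_j ∈ ℂ[X₁,…,X_k]`: `Y₀ = 1` and
`Y_j = -∑_{i=1}^{min(j,k)} Xᵢ · Y_{j-i}` for `j ≥ 1`. -/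
noncomputable def segreY (k : ℕ) : ℕ → MvPolynomial (Fin k) ℂ
  | 0 => 1
  | j + 1 =>
    -∑ i : Fin (min (j + 1) k),
      MvPolynomial.X (Fin.castLE (min_le_right (j + 1) k) i) * segreY k (j - i.val)
  decreasing_by omega

/-- The quantum relations of `G(k,n)`: the family `Y_{n-k+1}, …, Y_{n-1}, Yₙ + c`. -/
noncomputable def quantumRelation (k n : ℕ) (c : ℂ) (i : Fin k) : MvPolynomial (Fin k) ℂ :=
  if i.val + 1 < k then segreY k (n - k + 1 + i.val) else segreY k n + MvPolynomial.C c

open Polynomial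

/-! ### Division by the generic monic polynomial -/

section Chern
variable {B : Type*} [CommRing B] {k : ℕ}

/-- The sequence of coefficients of `1 + x₁ s + ⋯ + x_k s ^ k`: it is `1, x₁, …, x_k, 0, 0, …`,
the variable `x_{i+1}` being stored at the index `i : Fin k`. -/
def chernSeq (x : Fin k → B) : ℕ → B
  | 0 => 1
  | i + 1 => if h : i < k then x ⟨i, h⟩ else 0

/-- The monic polynomial `X ^ k + x₁ X ^ (k - 1) + ⋯ + x_k`. -/
noncomputable def chernPoly (x : Fin k → B) : B[X] :=
  ∑ a ∈ Finset.range (k + 1), C (chernSeq x a) * X ^ (k - a)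

lemma chernSeq_zero (x : Fin k → B) : chernSeq x 0 = 1 := rfl

lemma chernSeq_of_lt (x : Fin k → B) {a : ℕ} (h : k < a) : chernSeq x a = 0 := by
  obtain _ | i := a
  · omega
  · exact dif_neg (by omega)

lemma chernPoly_coeff (x : Fin k → B) (j : ℕ) :
    (chernPoly x).coeff j = if j ≤ k then chernSeq x (k - j) else 0 := by
  simp only [chernPoly, finsetSum_coeff, coeff_C_mul_X_pow]
  split_ifs with h
  · rw [Finset.sum_eq_single (k - j)]
    · rw [if_pos (by omega)]
    · intro b hb hne
      rw [Finset.mem_range] at hb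
      rw [if_neg (by omega)]
    · intro h'
      simp at h'
  · exact Finset.sum_eq_zero fun b hb => if_neg (by omega)

lemma chernPoly_monic (x : Fin k → B) : (chernPoly x).Monic :=
  monic_of_natDegree_le_of_coeff_eq_one k
    (natDegree_le_iff_coeff_eq_zero.2 fun j hj => by rw [chernPoly_coeff, if_neg (by omega)])
    (by simp [chernPoly_coeff, chernSeq])

lemma chernPoly_natDegree [Nontrivial B] (x : Fin k → B) : (chernPoly x).natDegree = k :=
  natDegree_eq_of_le_of_coeff_ne_zero
    (natDegree_le_iff_coeff_eq_zero.2 fun j hj => by rw [chernPoly_coeff, if_neg (by omega)])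
    (by simp [chernPoly_coeff, chernSeq])

lemma chernPoly_coeff_fin (x : Fin k → B) (i : Fin k) :
    (chernPoly x).coeff (k - 1 - i) = x i := by
  rw [chernPoly_coeff, if_pos (by omega), show k - (k - 1 - (i : ℕ)) = i + 1 by omega]
  simp [chernSeq]

lemma chernPoly_injective : Function.Injective (chernPoly : (Fin k → B) → B[X]) := by
  intro x y h
  ext i
  rw [← chernPoly_coeff_fin x, h, chernPoly_coeff_fin]

lemma exists_chernPoly_eq {G : B[X]} (hG : G.Monic) (hd : G.natDegree = k) :
    ∃ x : Fin k → B, chernPoly x = G := by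
  refine ⟨fun i => G.coeff (k - 1 - i), ?_⟩
  ext j
  rw [chernPoly_coeff]
  rcases lt_trichotomy j k with h | rfl | h
  · rw [if_pos h.le, show k - j = (k - j - 1) + 1 by omega]
    simp only [chernSeq]
    rw [dif_pos (by omega)]
    congr 1
    omega
  · simp only [le_refl, if_true, Nat.sub_self, chernSeq]
    rw [← hd]; exact hG.symm
  · rw [if_neg (by omega), coeff_eq_zero_of_natDegree_lt (by omega)]

/-- Up to sign, the remainder of `X ^ (m + k)` modulo `chernPoly x`, expressed through a sequence `y`
that is inverse to `chernSeq x` as a power series; see `chernPoly_mul_quotient`. -/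
noncomputable def segreRem (x : Fin k → B) (y : ℕ → B) (m : ℕ) : B[X] :=
  ∑ i ∈ Finset.range k,
    C (∑ a ∈ Finset.range (i + 1), chernSeq x a * y (m + 1 + i - a)) * X ^ (k - 1 - i)

/-- Division of `X ^ (m + k)` by `chernPoly x`: if `y` is the inverse power series of
`1 + x₁ s + ⋯ + x_k s ^ k`, the quotient is `y₀ X ^ m + y₁ X ^ (m - 1) + ⋯ + y_m`. -/
lemma chernPoly_mul_quotient (x : Fin k → B) (y : ℕ → B) (hy0 : y 0 = 1)
    (hy : ∀ j, ∑ a ∈ Finset.range (j + 2), chernSeq x a * y (j + 1 - a) = 0) (m : ℕ) :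
    chernPoly x * ∑ j ∈ Finset.range (m + 1), C (y j) * X ^ (m - j) =
      X ^ (m + k) - segreRem x y m := by
  induction m with
  | zero =>
    have h1 : chernPoly x = X ^ k +
        ∑ i ∈ Finset.range k, C (chernSeq x (i + 1)) * X ^ (k - 1 - i) := by
      rw [chernPoly, Finset.sum_range_succ', add_comm]
      congr 1
      · simp [chernSeq]
      · exact Finset.sum_congr rfl fun i _ => by rw [show k - (i + 1) = k - 1 - i by omega]
    simp only [zero_add, Finset.sum_range_one, hy0, map_one, Nat.sub_self, pow_zero, mul_one]
    rw [h1, sub_eq_add_neg, segreRem, ← Finset.sum_neg_distrib]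
    congr 1
    refine Finset.sum_congr rfl fun i _ => ?_
    rw [← neg_mul, ← C_neg]
    congr 2
    have := hy i
    rw [Finset.sum_range_succ, Nat.sub_self, hy0, mul_one] at this
    simp only [zero_add, add_comm 1 i]
    linear_combination this
  | succ m ih =>
    have h1 : ∑ j ∈ Finset.range (m + 1 + 1), C (y j) * X ^ (m + 1 - j) =
        (∑ j ∈ Finset.range (m + 1), C (y j) * X ^ (m - j)) * X + C (y (m + 1)) := by
      rw [Finset.sum_range_succ, Finset.sum_mul]
      simp only [Nat.sub_self, pow_zero, mul_one]
      congr 1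
      refine Finset.sum_congr rfl fun j hj => ?_
      rw [Finset.mem_range] at hj
      rw [mul_assoc, ← pow_succ, show m + 1 - j = m - j + 1 by omega]
    rw [h1, mul_add, ← mul_assoc, ih]
    set S : ℕ → B := fun i => ∑ a ∈ Finset.range (i + 1), chernSeq x a * y (m + 1 + i - a) with hS
    -- `S k` is the recurrence for `y (m + 1 + k)`, whose terms beyond `a = k` vanish.
    have hSk : S k = 0 := by
      rw [← hy (m + k), hS]
      simp only [show m + 1 + k = m + k + 1 by omega]
      refine Finset.sum_subset (by intro a; simp; omega) fun a _ ha => ?_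
      rw [chernSeq_of_lt x (by simpa using ha), zero_mul]
    have hstep : ∀ i, ∑ a ∈ Finset.range (i + 1), chernSeq x a * y (m + 1 + 1 + i - a) =
        S (i + 1) - chernSeq x (i + 1) * y (m + 1) := by
      intro i
      simp only [hS]
      rw [Finset.sum_range_succ _ (i + 1), show m + 1 + (i + 1) - (i + 1) = m + 1 by omega,
        add_sub_cancel_right]
      simp only [show m + 1 + (i + 1) = m + 1 + 1 + i by omega]
    have e1 : segreRem x y (m + 1) =
        ∑ i ∈ Finset.range (k + 1), C (S i) * X ^ (k - i) - C (S 0) * X ^ k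
          - (chernPoly x - X ^ k) * C (y (m + 1)) := by
      rw [segreRem, chernPoly, Finset.sum_range_succ', Finset.sum_range_succ' _ k]
      simp only [hstep, chernSeq_zero, Nat.sub_zero, add_sub_cancel_right, map_one, one_mul]
      rw [Finset.sum_mul, ← Finset.sum_sub_distrib]
      refine Finset.sum_congr rfl fun i _ => ?_
      rw [show k - (i + 1) = k - 1 - i by omega, C_sub, C_mul]
      ring
    have e2 : segreRem x y m * X = ∑ i ∈ Finset.range (k + 1), C (S i) * X ^ (k - i) := by
      rw [Finset.sum_range_succ, hSk, C_0, zero_mul, add_zero, segreRem, Finset.sum_mul]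
      refine Finset.sum_congr rfl fun i hi => ?_
      rw [Finset.mem_range] at hi
      rw [mul_assoc, ← pow_succ, show k - 1 - i + 1 = k - i by omega]
    have hS0 : S 0 = y (m + 1) := by simp [hS, chernSeq]
    rw [e1, ← e2, hS0, show m + 1 + k = m + k + 1 by omega]
    ring

lemma segreRem_coeff (x : Fin k → B) (y : ℕ → B) (m i : ℕ) (hi : i < k) :
    (segreRem x y m).coeff (k - 1 - i) =
      ∑ a ∈ Finset.range (i + 1), chernSeq x a * y (m + 1 + i - a) := by
  simp only [segreRem, finsetSum_coeff, coeff_C_mul_X_pow]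
  rw [Finset.sum_eq_single i]
  · rw [if_pos rfl]
  · intro b hb hne
    rw [Finset.mem_range] at hb
    rw [if_neg (by omega)]
  · intro h'
    simp at h'
    omega

lemma degree_segreRem_lt (x : Fin k → B) (y : ℕ → B) (m : ℕ) :
    (segreRem x y m).degree < k := by
  refine (degree_sum_le _ _).trans_lt ((Finset.sup_lt_iff (WithBot.bot_lt_coe k)).2 fun i hi => ?_)
  rw [Finset.mem_range] at hi
  exact (degree_C_mul_X_pow_le _ _).trans_lt (Nat.cast_lt.2 (by omega))

/-- Monic divisors of a separable polynomial do not deform infinitesimally. If `F = P' * Q'`, then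
`P'` is coprime to `Q'`, hence so is `P`, since `P' - P` squares to zero. As `P` divides
`(P' - P) * Q'`, it divides `P' - P`, which has smaller degree. -/
lemma eq_of_dvd_of_sub_sq [Nontrivial B] {F P P' : B[X]} (hF : F.Separable)
    (hP : P.Monic) (hP' : P'.Monic) (hdeg : P'.natDegree = P.natDegree) (hdvd : P ∣ F) (hdvd' : P' ∣ F)
    (hsq : (P' - P) * (P' - P) = 0) : P' = P := by
  obtain ⟨Q, hQ⟩ := hdvd
  obtain ⟨Q', hQ'⟩ := hdvd'
  obtain ⟨u, v, huv⟩ := (hQ' ▸ hF : (P' * Q').Separable).isCoprime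
  have hcop : IsCoprime P Q' := by
    refine ⟨(1 + u * (P' - P)) * u, (1 + u * (P' - P)) * v, ?_⟩
    linear_combination (1 + u * (P' - P)) * huv - u ^ 2 * hsq
  have hd : P ∣ (P' - P) * Q' := ⟨Q - Q', by linear_combination hQ - hQ'⟩
  have hd := hcop.dvd_of_dvd_mul_right hd
  by_contra hne
  refine hP.not_dvd_of_degree_lt (sub_ne_zero.2 hne) ?_ hd
  have : P'.degree = P.degree := by
    rw [degree_eq_natDegree hP.ne_zero, degree_eq_natDegree hP'.ne_zero, hdeg]
  exact this ▸ degree_sub_lt_left this hP'.ne_zero (by rw [hP.leadingCoeff, hP'.leadingCoeff])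

end Chern

/-! ### The quantum relations as a divisibility -/

section Rel
variable {B : Type*} [CommRing B] [Algebra ℂ B] {k : ℕ}

lemma segre_recurrence (x : Fin k → B) (j : ℕ) :
    ∑ a ∈ Finset.range (j + 2),
      chernSeq x a * MvPolynomial.aeval x (segreY k (j + 1 - a)) = 0 := by
  rw [Finset.sum_range_succ', Nat.sub_zero, segreY]
  simp only [chernSeq, map_neg, map_sum, map_mul, MvPolynomial.aeval_X, one_mul, add_neg_eq_zero]
  have h := Fin.sum_univ_eq_sum_range
    (fun i => chernSeq x (i + 1) * MvPolynomial.aeval x (segreY k (j - i))) (min (j + 1) k)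
  have h2 : ∀ i : Fin (min (j + 1) k),
      x (Fin.castLE (min_le_right (j + 1) k) i) = chernSeq x (i + 1) := by
    intro i
    have := i.2
    simp only [chernSeq]
    rw [dif_pos (by omega)]
    rfl
  simp only [h2, h]
  symm
  simp only [Nat.reduceSubDiff]
  refine Finset.sum_subset (by intro a; simp; omega) fun a ha ha' => ?_
  simp only [Finset.mem_range, lt_min_iff] at ha ha'
  rw [chernSeq_of_lt x (by omega), zero_mul]

/-- A point `x` satisfies the quantum relations exactly when `chernPoly x` divides `X ^ n + c`.
The remainder of `X ^ n + c` has coefficients that depend on `Y_{n-k+1}, …, Y_{n-1}, Yₙ + c`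
through a unitriangular matrix, so that it vanishes exactly when these do. -/
lemma relations_iff_dvd [Nontrivial B] {n : ℕ} (hk : 1 ≤ k) (hkn : k ≤ n) (c : ℂ)
    (x : Fin k → B) :
    (∀ i, MvPolynomial.aeval x (quantumRelation k n c i) = 0) ↔
      chernPoly x ∣ X ^ n + C (algebraMap ℂ B c) := by
  set y : ℕ → B := fun j => MvPolynomial.aeval x (segreY k j) with hy
  have hmul := chernPoly_mul_quotient x y (by simp [hy, segreY]) (segre_recurrence x) (n - k)
  rw [Nat.sub_add_cancel hkn] at hmul
  have hdeg : (segreRem x y (n - k) + C (algebraMap ℂ B c)).degree < (chernPoly x).degree := by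
    rw [degree_eq_natDegree (chernPoly_monic x).ne_zero, chernPoly_natDegree]
    refine (degree_add_le _ _).trans_lt (max_lt (degree_segreRem_lt x y _) ?_)
    exact degree_C_le.trans_lt (by exact_mod_cast hk)
  have hF : X ^ n + C (algebraMap ℂ B c) =
      chernPoly x * ∑ j ∈ Finset.range (n - k + 1), C (y j) * X ^ (n - k - j) +
        (segreRem x y (n - k) + C (algebraMap ℂ B c)) := by
    rw [hmul]; ring
  have hrel : ∀ i : Fin k, MvPolynomial.aeval x (quantumRelation k n c i) =
      y (n - k + 1 + i) + if (i : ℕ) + 1 < k then 0 else algebraMap ℂ B c := by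
    intro i
    unfold quantumRelation
    split_ifs with h
    · simp [hy]
    · simp [hy, show n - k + 1 + (i : ℕ) = n by omega]
  have hdvd : chernPoly x ∣ X ^ n + C (algebraMap ℂ B c) ↔
      segreRem x y (n - k) + C (algebraMap ℂ B c) = 0 := by
    rw [hF, dvd_add_right (dvd_mul_right _ _)]
    constructor
    · intro h
      by_contra h0
      exact (chernPoly_monic x).not_dvd_of_degree_lt h0 hdeg h
    · intro h; rw [h]; exact dvd_zero _
  rw [hdvd]
  have hcoeff : segreRem x y (n - k) + C (algebraMap ℂ B c) = 0 ↔
      ∀ i < k, (∑ a ∈ Finset.range (i + 1), chernSeq x a * y (n - k + 1 + i - a)) +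
        (if i + 1 < k then 0 else algebraMap ℂ B c) = 0 := by
    have key : ∀ i < k, (segreRem x y (n - k) + C (algebraMap ℂ B c)).coeff (k - 1 - i) =
        (∑ a ∈ Finset.range (i + 1), chernSeq x a * y (n - k + 1 + i - a)) +
        (if i + 1 < k then 0 else algebraMap ℂ B c) := by
      intro i hi
      rw [coeff_add, segreRem_coeff x y _ i hi, coeff_C]
      congr 1
      split_ifs <;> first | rfl | omega
    constructor
    · intro h i hi
      rw [← key i hi, h, coeff_zero]
    · intro h
      ext j
      by_cases hj : j < k
      · have := key (k - 1 - j) (by omega)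
        rw [show k - 1 - (k - 1 - j) = j by omega] at this
        rw [this, h _ (by omega), coeff_zero]
      · rw [coeff_zero]
        refine coeff_eq_zero_of_degree_lt (hdeg.trans_le ?_)
        rw [degree_eq_natDegree (chernPoly_monic x).ne_zero, chernPoly_natDegree]
        exact_mod_cast (by omega)
  rw [hcoeff]
  simp only [hrel]
  have step : ∀ i < k, (∀ b < i, y (n - k + 1 + b) = 0) →
      ∑ a ∈ Finset.range (i + 1), chernSeq x a * y (n - k + 1 + i - a) = y (n - k + 1 + i) := by
    intro i hi h
    rw [Finset.sum_range_succ', Finset.sum_eq_zero, zero_add]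
    · simp [chernSeq]
    · intro a ha
      rw [Finset.mem_range] at ha
      rw [show n - k + 1 + i - (a + 1) = n - k + 1 + (i - (a + 1)) by omega, h _ (by omega),
        mul_zero]
  constructor
  · intro h i hi
    rw [step i hi fun b hb => ?_]
    · exact h ⟨i, hi⟩
    · have := h ⟨b, by omega⟩
      simpa [show b + 1 < k by omega] using this
  · intro h
    have h' : ∀ i < k, y (n - k + 1 + i) + (if i + 1 < k then 0 else algebraMap ℂ B c) = 0 := by
      intro i
      induction i using Nat.strong_induction_on with
      | _ i ih =>
        intro hi
        refine Eq.trans ?_ (h i hi)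
        rw [step i hi]
        intro b hb
        have := ih b hb (by omega)
        simpa [show b + 1 < k by omega] using this
    exact fun i => h' i i.2

lemma separable_X_pow_add_C {n : ℕ} (hn : n ≠ 0) {c : ℂ} (hc : c ≠ 0) :
    (X ^ n + C (algebraMap ℂ B c) : B[X]).Separable := by
  have h := separable_X_pow_sub_C (F := ℂ) (n := n) (-c) (by exact_mod_cast hn) (neg_ne_zero.2 hc)
  simpa using h.map (f := algebraMap ℂ B)

end Rel

/-! ### Points of the quantum ring -/

section Points

/-- The quantum cohomology ring of `G(k,n)`. -/
abbrev QuantumRing (k n : ℕ) (c : ℂ) : Type :=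
  MvPolynomial (Fin k) ℂ ⧸ Ideal.span (Set.range (quantumRelation k n c))

variable {k n : ℕ} {c : ℂ} {B : Type*} [CommRing B] [Algebra ℂ B]

/-- The images `x₁, …, x_k` of the generators under a homomorphism out of `QuantumRing k n c`. -/
noncomputable def quantumCoords (f : QuantumRing k n c →ₐ[ℂ] B) (i : Fin k) : B :=
  f (Ideal.Quotient.mk _ (MvPolynomial.X i))

lemma aeval_quantumCoords (f : QuantumRing k n c →ₐ[ℂ] B) (p : MvPolynomial (Fin k) ℂ) :
    MvPolynomial.aeval (quantumCoords f) p = f (Ideal.Quotient.mk _ p) := by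
  have : MvPolynomial.aeval (quantumCoords f) = f.comp (Ideal.Quotient.mkₐ ℂ _) := by
    ext i
    simp [quantumCoords]
  rw [this]
  rfl

lemma quantumCoords_injective :
    Function.Injective (quantumCoords : (QuantumRing k n c →ₐ[ℂ] B) → Fin k → B) := by
  intro f g h
  ext x
  obtain ⟨p, rfl⟩ := Ideal.Quotient.mk_surjective x
  rw [← aeval_quantumCoords, h, aeval_quantumCoords]

lemma chernPoly_quantumCoords_dvd [Nontrivial B] (hk : 1 ≤ k) (hkn : k ≤ n)
    (f : QuantumRing k n c →ₐ[ℂ] B) :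
    chernPoly (quantumCoords f) ∣ X ^ n + C (algebraMap ℂ B c) := by
  rw [← relations_iff_dvd hk hkn]
  intro i
  rw [aeval_quantumCoords, Ideal.Quotient.eq_zero_iff_mem.2 
    (Ideal.subset_span (Set.mem_range_self i)), map_zero]

lemma exists_quantumCoords_eq [Nontrivial B] (hk : 1 ≤ k) (hkn : k ≤ n) (x : Fin k → B)
    (hx : chernPoly x ∣ X ^ n + C (algebraMap ℂ B c)) :
    ∃ f : QuantumRing k n c →ₐ[ℂ] B, quantumCoords f = x := by
  have hx := (relations_iff_dvd hk hkn c x).2 hx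
  refine ⟨Ideal.Quotient.liftₐ _ (MvPolynomial.aeval x) fun a ha => ?_, ?_⟩
  · have hle : Ideal.span (Set.range (quantumRelation k n c)) ≤
        RingHom.ker (MvPolynomial.aeval x : MvPolynomial (Fin k) ℂ →ₐ[ℂ] B) := by
      rw [Ideal.span_le]
      rintro _ ⟨i, rfl⟩
      exact hx i
    exact hle ha
  · ext i
    exact MvPolynomial.aeval_X x i

lemma formallyUnramified_quantumRing (hk : 1 ≤ k) (hkn : k ≤ n) (hc : c ≠ 0) :
    Algebra.FormallyUnramified ℂ (QuantumRing k n c) := by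
  rw [Algebra.FormallyUnramified.iff_comp_injective]
  intro A _ _ I hI f g hfg
  cases subsingleton_or_nontrivial A
  · exact AlgHom.ext fun _ => Subsingleton.elim _ _
  apply quantumCoords_injective
  apply chernPoly_injective
  refine eq_of_dvd_of_sub_sq (separable_X_pow_add_C (n := n) (by omega) hc) (chernPoly_monic _)
    (chernPoly_monic _) (by simp only [chernPoly_natDegree])
    (chernPoly_quantumCoords_dvd hk hkn g) (chernPoly_quantumCoords_dvd hk hkn f) ?_
  have hcoord : ∀ i, quantumCoords f i - quantumCoords g i ∈ I := by
    intro i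
    have h : ∀ a, Ideal.Quotient.mkₐ ℂ I (f a) = Ideal.Quotient.mkₐ ℂ I (g a) := fun a => by
      rw [← AlgHom.comp_apply, ← AlgHom.comp_apply, hfg]
    exact Ideal.Quotient.eq.1 (h _)
  have hmem : ∀ j, (chernPoly (quantumCoords f) - chernPoly (quantumCoords g)).coeff j ∈ I := by
    intro j
    rw [coeff_sub, chernPoly_coeff, chernPoly_coeff]
    split_ifs with hj
    · cases k - j with
      | zero => simp [chernSeq]
      | succ a =>
        simp only [chernSeq]
        split_ifs with ha
        · exact hcoord ⟨a, ha⟩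
        · simp
    · simp
  ext j
  rw [coeff_mul, coeff_zero]
  refine Finset.sum_eq_zero fun p _ => ?_
  rw [← Ideal.mem_bot, ← hI, pow_two]
  exact Ideal.mul_mem_mul (hmem _) (hmem _)

/-- The complex points of the quantum ring are the monic divisors of degree `k` of `X ^ n + c`, that
is, the `k`-element subsets of its `n` roots. -/
lemma natCard_algHom_quantumRing (hk : 1 ≤ k) (hkn : k ≤ n) (hc : c ≠ 0) :
    Nat.card (QuantumRing k n c →ₐ[ℂ] ℂ) = n.choose k := by
  classical
  set F : ℂ[X] := X ^ n + C c with hF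
  have hsep : F.Separable := separable_X_pow_add_C (B := ℂ) (by omega) hc
  have hmonic : F.Monic := monic_X_pow_add_C c (by omega)
  have hcard : F.roots.toFinset.card = n := by
    rw [Multiset.toFinset_card_of_nodup (nodup_roots hsep),
      splits_iff_card_roots.1 (IsAlgClosed.splits F), natDegree_X_pow_add_C]
  have hprod : ∀ G : ℂ[X], G.Monic → G ∣ F →
      G = ∏ s ∈ G.roots.toFinset, (X - C s) := by
    intro G hG hd
    have hnd : G.roots.Nodup := nodup_roots (hsep.of_dvd hd)
    conv_lhs => rw [(IsAlgClosed.splits G).eq_prod_roots_of_monic hG]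
    rw [Finset.prod_eq_multiset_prod, Multiset.toFinset_val, hnd.dedup]
  let φ : (QuantumRing k n c →ₐ[ℂ] ℂ) → Finset.powersetCard k F.roots.toFinset := fun f =>
    ⟨(chernPoly (quantumCoords f)).roots.toFinset, by
      have hd : chernPoly (quantumCoords f) ∣ F := chernPoly_quantumCoords_dvd hk hkn f
      rw [Finset.mem_powersetCard]
      refine ⟨Multiset.toFinset_subset.2 (Multiset.subset_of_le
        (roots.le_of_dvd hmonic.ne_zero hd)), ?_⟩
      rw [Multiset.toFinset_card_of_nodup (nodup_roots (hsep.of_dvd hd)),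
        splits_iff_card_roots.1 (IsAlgClosed.splits _), chernPoly_natDegree]⟩
  have hφ : Function.Bijective φ := by
    constructor
    · intro f g hfg
      apply quantumCoords_injective
      apply chernPoly_injective
      have hfg := congrArg Subtype.val hfg
      simp only [φ] at hfg
      rw [hprod _ (chernPoly_monic _) (chernPoly_quantumCoords_dvd hk hkn f), hfg,
        ← hprod _ (chernPoly_monic _) (chernPoly_quantumCoords_dvd hk hkn g)]
    · rintro ⟨S, hS⟩
      rw [Finset.mem_powersetCard] at hS
      obtain ⟨x, hx⟩ := exists_chernPoly_eq (k := k) (monic_prod_X_sub_C id S)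
        (by rw [natDegree_finsetProd_X_sub_C_eq_card, hS.2])
      have hd : chernPoly x ∣ X ^ n + C (algebraMap ℂ ℂ c) := by
        change _ ∣ F
        rw [hx, hprod F hmonic dvd_rfl]
        exact Finset.prod_dvd_prod_of_subset _ _ _ hS.1
      obtain ⟨f, rfl⟩ := exists_quantumCoords_eq hk hkn x hd
      refine ⟨f, Subtype.ext ?_⟩
      simp only [φ, hx, id]
      rw [roots_prod_X_sub_C, Finset.val_toFinset]
  rw [Nat.card_eq_of_bijective φ hφ, Nat.card_eq_fintype_card, Fintype.card_coe,
    Finset.card_powersetCard, hcard]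

end Points

/-- For `1 ≤ k ≤ n` and `c ≠ 0`, the quantum cohomology ring
`ℂ[X₁,…,X_k]/(Y_{n-k+1}, …, Y_{n-1}, Yₙ + c)` of the Grassmannian `G(k,n)` has dimension
`binomial(n,k)` as a `ℂ`-vector space. -/
theorem quantum_grassmannian_ring_dimension
    (n k : ℕ) (hk : 1 ≤ k) (hkn : k ≤ n) (c : ℂ) (hc : c ≠ 0) :
    FiniteDimensional ℂ
      (MvPolynomial (Fin k) ℂ ⧸ Ideal.span (Set.range (quantumRelation k n c))) ∧
    Module.finrank ℂ
        (MvPolynomial (Fin k) ℂ ⧸ Ideal.span (Set.range (quantumRelation k n c))) =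
      Nat.choose n k := by
  have hunr : Algebra.FormallyUnramified ℂ (QuantumRing k n c) :=
    formallyUnramified_quantumRing hk hkn hc
  have hfin : Module.Finite ℂ (QuantumRing k n c) :=
    Algebra.FormallyUnramified.finite_of_free ℂ (QuantumRing k n c)
  have het : Algebra.FormallyEtale ℂ (QuantumRing k n c) :=
    .of_formallyUnramified_of_field ℂ (QuantumRing k n c)
  have hart : IsArtinianRing (QuantumRing k n c) := .of_finite ℂ _
  let e := Algebra.FormallyEtale.equivPiOfIsSepClosed ℂ (QuantumRing k n c)
  have hsplit : Algebra.IsFiniteSplit ℂ (QuantumRing k n c) := .of_algEquiv e.symm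
  refine ⟨hfin, ?_⟩
  cases nonempty_fintype (PrimeSpectrum (QuantumRing k n c))
  rw [e.toLinearEquiv.finrank_eq, Module.finrank_fintype_fun_eq_card, ← Nat.card_eq_fintype_card,
    ← Nat.card_congr (Algebra.IsFiniteSplit.algHomEquivPrimeSpectrum ℂ (QuantumRing k n c)),
    natCard_algHom_quantumRing hk hkn hc]
end

section
/- Let n ≥ k ≥ 1 be integers and a ∈ ℂ with a ≠ 0. Then the sum, over all k-tuples (λ₁,…,λ_k) of complex numbers with λᵢⁿ = a for each i, of the quantity (∏_{i=1}^{k} λᵢ^{n−k}) · (∏_{1 ≤ i < j ≤ k} (λᵢ − λⱼ)²) / (∏_{i=1}^{k} n·λᵢ^{n−1}) equals (−1)^{k(k−1)/2} · k!. -/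
/-!
Each summand is `∏ᵢ w(λᵢ)` times the square of the Vandermonde determinant of `λ`, with weight
`w(x) = x^(n-k) / (n x^(n-1)) = x^(n-k+1) / (n a)` on the set `R` of `n`-th roots of `a`.
Andréief's identity (`sum_weight_mul_det_vandermonde_sq`) turns such a sum into `k!` times the
determinant of the Hankel matrix of moments `m (i + j)`, where `m s = ∑_{x ∈ R} w(x) x^s`.
By orthogonality of roots of unity (`sum_pow_roots`), `m s` is `1` for `s = k - 1` and `0` for
the other `s ≤ 2k - 2`: the exponent `n - k + 1 + s` lies strictly between `0` and `2n`, so `n`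
divides it only when it equals `n`. The Hankel matrix is therefore the antidiagonal
permutation matrix, whose determinant is the sign `(-1)^(k(k-1)/2)` of the order-reversing
permutation.
-/

theorem sign_revPerm (k : ℕ) :
    Equiv.Perm.sign (Fin.revPerm : Equiv.Perm (Fin k)) = (-1) ^ (k * (k - 1) / 2) := by
  rw [Equiv.Perm.sign_eq_prod_prod_Iio]
  have h : ∀ j : Fin k, ∏ i ∈ Finset.Iio j,
      (if Fin.revPerm i < Fin.revPerm j then (1 : ℤˣ) else -1) = (-1) ^ (j : ℕ) := by
    intro j
    rw [Finset.prod_congr rfl (g := fun _ => (-1 : ℤˣ))]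
    · simp
    · intro i hi
      rw [if_neg]
      simpa using (Finset.mem_Iio.mp hi).le
  rw [Finset.prod_congr rfl (fun j _ => h j), Finset.prod_pow_eq_pow_sum,
    Fin.sum_univ_eq_sum_range (fun i => i), Finset.sum_range_id]

/-- Andréief's identity for the square of a Vandermonde determinant: integrating it against a
product weight on a finite set gives `k!` times the Hankel determinant of the moments. -/
theorem sum_weight_mul_det_vandermonde_sq (k : ℕ) (R : Finset ℂ) (w : ℂ → ℂ) :
    ∑ l ∈ Fintype.piFinset (fun _ : Fin k => R),
        (∏ i, w (l i)) * (Matrix.vandermonde l).det ^ 2 =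
      Nat.factorial k *
        (Matrix.of fun i j : Fin k => ∑ x ∈ R, w x * x ^ ((i : ℕ) + j)).det := by
  set M : Matrix (Fin k) (Fin k) ℂ :=
    Matrix.of fun i j : Fin k => ∑ x ∈ R, w x * x ^ ((i : ℕ) + j) with hM
  have hdet : ∀ l : Fin k → ℂ, (Matrix.vandermonde l).det =
      ∑ σ : Equiv.Perm (Fin k), ((Equiv.Perm.sign σ : ℤ) : ℂ) * ∏ i, l i ^ (σ i : ℕ) := by
    intro l
    rw [← Matrix.det_transpose, Matrix.det_apply']
    simp [Matrix.vandermonde_apply]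
  have hmom : ∀ σ τ : Equiv.Perm (Fin k),
      ∑ l ∈ Fintype.piFinset (fun _ : Fin k => R),
        (∏ i, w (l i)) * ((∏ i, l i ^ (σ i : ℕ)) * ∏ i, l i ^ (τ i : ℕ)) =
      ∏ i, M (σ i) (τ i) := by
    intro σ τ
    simp only [hM, Matrix.of_apply]
    rw [← Finset.sum_prod_piFinset R
      (fun i x => w x * x ^ ((σ i : ℕ) + (τ i : ℕ)))]
    refine Finset.sum_congr rfl fun l _ => ?_
    simp only [← Finset.prod_mul_distrib, pow_add]
  have hsub : ∀ σ : Equiv.Perm (Fin k),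
      ∑ τ : Equiv.Perm (Fin k), ((Equiv.Perm.sign τ : ℤ) : ℂ) * ∏ i, M (σ i) (τ i) =
        ((Equiv.Perm.sign σ : ℤ) : ℂ) * M.det := by
    intro σ
    rw [← Matrix.det_permute, ← Matrix.det_transpose, Matrix.det_apply']
    rfl
  have hsign : ∀ σ : Equiv.Perm (Fin k),
      ((Equiv.Perm.sign σ : ℤ) : ℂ) * ((Equiv.Perm.sign σ : ℤ) : ℂ) = 1 := by
    intro σ
    rcases Int.units_eq_one_or (Equiv.Perm.sign σ) with h | h <;> simp [h]
  calc _ = ∑ σ : Equiv.Perm (Fin k), ((Equiv.Perm.sign σ : ℤ) : ℂ) *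
        ∑ τ : Equiv.Perm (Fin k), ((Equiv.Perm.sign τ : ℤ) : ℂ) * ∏ i, M (σ i) (τ i) := by
        simp_rw [← hmom, hdet, sq, Finset.sum_mul_sum, Finset.mul_sum]
        rw [Finset.sum_comm]
        refine Finset.sum_congr rfl fun σ _ => ?_
        rw [Finset.sum_comm]
        refine Finset.sum_congr rfl fun τ _ => Finset.sum_congr rfl fun l _ => ?_
        ring
    _ = _ := by
        simp_rw [hsub, ← mul_assoc, hsign]
        simp [Fintype.card_perm]

/-- Orthogonality: multiplication by a primitive `n`-th root of unity permutes the `n`-th roots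
of `a` and scales their `N`-th power sum by a factor different from `1`, unless `n ∣ N`. -/
theorem sum_pow_roots (n : ℕ) (hn : n ≠ 0) (a : ℂ) (R : Finset ℂ)
    (hR : ∀ x, x ∈ R ↔ x ^ n = a) (N : ℕ) (hN : ¬ n ∣ N) : ∑ x ∈ R, x ^ N = 0 := by
  have hζ := Complex.isPrimitiveRoot_exp n hn
  set ζ := Complex.exp (2 * Real.pi * Complex.I / n)
  have hζ0 : ζ ≠ 0 := hζ.ne_zero hn
  have h1 : ∑ x ∈ R, x ^ N = ∑ x ∈ R, (ζ * x) ^ N := by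
    symm
    refine Finset.sum_bij (fun x _ => ζ * x) ?_ ?_ ?_ ?_
    · intro x hx
      rw [hR] at hx ⊢
      rw [mul_pow, hζ.pow_eq_one, hx, one_mul]
    · intro x _ y _ h
      exact mul_left_cancel₀ hζ0 h
    · intro y hy
      refine ⟨ζ⁻¹ * y, ?_, by field_simp⟩
      rw [hR] at hy ⊢
      rw [mul_pow, inv_pow, hζ.pow_eq_one, hy, inv_one, one_mul]
    · intro x _
      rfl
  simp_rw [mul_pow, ← Finset.mul_sum] at h1
  have h2 : ζ ^ N ≠ 1 := fun h => hN ((hζ.pow_eq_one_iff_dvd N).mp h)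
  have h3 : (ζ ^ N - 1) * ∑ x ∈ R, x ^ N = 0 := by linear_combination -h1
  exact (mul_eq_zero.mp h3).resolve_left (sub_ne_zero.mpr h2)

theorem card_nthRootsFinset_complex (n : ℕ) (hn : n ≠ 0) (a : ℂ) (ha : a ≠ 0) :
    (Polynomial.nthRootsFinset n a).card = n := by
  have hζ := Complex.isPrimitiveRoot_exp n hn
  rw [Polynomial.nthRootsFinset, ← Multiset.toFinset_eq (hζ.nthRoots_nodup ha), Finset.card_mk,
    hζ.card_nthRoots, if_pos]
  exact IsAlgClosed.exists_pow_nat_eq a (Nat.pos_of_ne_zero hn)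

/-- Let `n ≥ k ≥ 1` and `a ≠ 0`.  Summing over all `k`-tuples
`(λ₁,…,λ_k)` of `n`-th roots of `a` the quantity
`(∏ᵢ λᵢ^{n-k}) · (∏_{i<j} (λᵢ - λⱼ)²) / (∏ᵢ n λᵢ^{n-1})`
gives `(-1)^{k(k-1)/2} · k!`. -/
theorem vafa_intriligator_normalization
    (n k : ℕ) (hk : 1 ≤ k) (hkn : k ≤ n) (a : ℂ) (ha : a ≠ 0)
    (S : Finset (Fin k → ℂ))
    (hS : ∀ l : Fin k → ℂ, l ∈ S ↔ ∀ i, l i ^ n = a) :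
    ∑ l ∈ S,
        (∏ i : Fin k, l i ^ (n - k)) *
          (∏ p ∈ Finset.univ.filter (fun p : Fin k × Fin k => p.1 < p.2),
            (l p.1 - l p.2) ^ 2) /
          ∏ i : Fin k, ((n : ℂ) * l i ^ (n - 1)) =
      (-1 : ℂ) ^ (k * (k - 1) / 2) * Nat.factorial k := by
  have hn : n ≠ 0 := by omega
  have hnC : (n : ℂ) ≠ 0 := Nat.cast_ne_zero.mpr hn
  set R := Polynomial.nthRootsFinset n a with hRdef
  have hR : ∀ x, x ∈ R ↔ x ^ n = a := fun x =>
    Polynomial.mem_nthRootsFinset (Nat.pos_of_ne_zero hn) a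
  have hSR : S = Fintype.piFinset (fun _ : Fin k => R) := by
    ext l
    simp [hS, hR]
  have hvan : ∀ l : Fin k → ℂ,
      ∏ p ∈ Finset.univ.filter (fun p : Fin k × Fin k => p.1 < p.2), (l p.1 - l p.2) ^ 2 =
        (Matrix.vandermonde l).det ^ 2 := by
    intro l
    rw [Matrix.det_vandermonde, ← Finset.prod_pow]
    simp_rw [← Finset.prod_pow]
    rw [Finset.prod_sigma']
    refine Finset.prod_bij' (fun p _ => ⟨p.1, p.2⟩) (fun p _ => (p.1, p.2)) ?_ ?_ ?_ ?_ ?_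
    · simp
    · simp
    · simp
    · simp
    · intro p _
      ring
  have hterm : ∀ l ∈ Fintype.piFinset (fun _ : Fin k => R),
      (∏ i : Fin k, l i ^ (n - k)) *
          (∏ p ∈ Finset.univ.filter (fun p : Fin k × Fin k => p.1 < p.2),
            (l p.1 - l p.2) ^ 2) /
          ∏ i : Fin k, ((n : ℂ) * l i ^ (n - 1)) =
      (∏ i, (fun x : ℂ => x ^ (n - k + 1) / (n * a)) (l i)) *
        (Matrix.vandermonde l).det ^ 2 := by
    intro l hl
    rw [hvan, mul_div_right_comm, ← Finset.prod_div_distrib]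
    congr 1
    refine Finset.prod_congr rfl fun i _ => ?_
    have hli : l i ^ n = a := (hR _).mp (Fintype.mem_piFinset.mp hl i)
    have hl0 : l i ≠ 0 := by
      intro h
      rw [h, zero_pow hn] at hli
      exact ha hli.symm
    have hsplit : a = l i ^ (n - 1) * l i := by
      rw [← pow_succ, Nat.sub_add_cancel (by omega), hli]
    rw [div_eq_div_iff (mul_ne_zero hnC (pow_ne_zero _ hl0)) (mul_ne_zero hnC ha), hsplit]
    ring
  have hM : (Matrix.of fun i j : Fin k =>
      ∑ x ∈ R, (fun x : ℂ => x ^ (n - k + 1) / (n * a)) x * x ^ ((i : ℕ) + j)) =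
      (1 : Matrix (Fin k) (Fin k) ℂ).submatrix Fin.revPerm id := by
    ext i j
    have hsum : ∑ x ∈ R, (fun x : ℂ => x ^ (n - k + 1) / (n * a)) x * x ^ ((i : ℕ) + j) =
        (∑ x ∈ R, x ^ (n - k + 1 + (i + j))) / (n * a) := by
      rw [Finset.sum_div]
      refine Finset.sum_congr rfl fun x _ => ?_
      rw [pow_add x (n - k + 1)]
      ring
    rw [Matrix.of_apply, hsum, Matrix.submatrix_apply, Matrix.one_apply]
    have hi := i.isLt
    have hj := j.isLt
    have hrev : Fin.revPerm i = id j ↔ n - k + 1 + ((i : ℕ) + j) = n := by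
      rw [Fin.ext_iff, Fin.revPerm_apply, Fin.val_rev]
      simp only [id]
      omega
    by_cases h : n - k + 1 + ((i : ℕ) + j) = n
    · rw [if_pos (hrev.mpr h), h, Finset.sum_congr rfl (fun x hx => (hR x).mp hx),
        Finset.sum_const, card_nthRootsFinset_complex n hn a ha, nsmul_eq_mul,
        div_self (mul_ne_zero hnC ha)]
    · rw [if_neg (fun h' => h (hrev.mp h')), sum_pow_roots n hn a R hR, zero_div]
      -- the exponent is positive and less than `2 * n`, so `n` divides it only if it equals `n`
      rintro ⟨c, hc⟩
      rcases c with _ | _ | c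
      · omega
      · omega
      · have : n * (c + 1 + 1) = n * c + n + n := by ring
        have : 0 ≤ n * c := Nat.zero_le _
        omega
  rw [hSR, Finset.sum_congr rfl hterm]
  refine (sum_weight_mul_det_vandermonde_sq k R
    (fun x : ℂ => x ^ (n - k + 1) / (n * a))).trans ?_
  rw [hM, Matrix.det_permute, sign_revPerm, Matrix.det_one]
  push_cast
  ring
end
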